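/- Let κ > -1 and ρ > -1 be real, let m ≥ 1 be an integer and n a nonnegative integer. Then for every z ∈ ℂ with z ≠ 0 and every w ∈ ℂ, the annihilation relation holds: z · D[u ↦ Z^{κ,ρ}_{m,n}(u,w)](z) - (n-m)·Z^{κ,ρ}_{m,n}(z,w) = m(n+ρ+κ+1)·w·Z^{κ+1,ρ}_{m-1,n}(z,w), where D denotes the complex derivative in u with w held fixed. -/

import Mathlib

/-!
On the functions `b j = (1 - z w) ^ j z ^ (s - j)` the Euler operator `z ∂/∂z` acts by
`b j ↦ (s - j) b j - j w b (j - 1)`. Hence on a sum `∑ j ≤ m, a j b j w ^ (m - j)` the operator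
`z ∂/∂z - (s - m)` kills the top term `j = m`, and after an index shift it amounts to replacing
`a j` by `(m - j) a j - (j + 1) a (j + 1)`, with a factor `w` taken out.

For the Zernike coefficients the quotients of Gamma functions are Pochhammer polynomials. Both
terms of this difference are then multiples of the `j`-th coefficient for `κ + 1` and `m - 1`, with
ratios `m (κ + j + 1)` and `-m (ν - j)` where `ν = n + ρ`, and
`(κ + j + 1) + (ν - j) = n + ρ + κ + 1`.
-/

open Complex Finset

/-- The fractional Zernike function `Z^{κ,ρ}_{m,n}(z,w)`, viewed as a function of two
independent complex variables. -/
noncomputable def fracZernike (κ ρ : ℝ) (m n : ℕ) (z w : ℂ) : ℂ :=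
  ∑ j ∈ Finset.range (m + 1),
    ((-1 : ℂ) ^ j * (Nat.factorial m : ℂ) * Complex.Gamma ((n : ℂ) + ρ + 1) *
        Complex.Gamma ((κ : ℂ) + m + 1) /
      ((Nat.factorial j : ℂ) * (Nat.factorial (m - j) : ℂ) *
        Complex.Gamma ((n : ℂ) + ρ - j + 1) * Complex.Gamma ((κ : ℂ) + j + 1))) *
    (1 - z * w) ^ j * z ^ ((n : ℤ) - (j : ℤ)) * w ^ (m - j)

section Expansion

variable {𝕜 : Type*}

/-- The sum `∑ a j (1 - z w) ^ j z ^ (s - j) w ^ (m - j)` over `j ≤ m`: a Zernike-type function with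
unspecified coefficients `a`, whose integer exponent `s` need not be related to them. -/
def zernikeExpansion [Field 𝕜] (a : ℕ → 𝕜) (s : ℤ) (m : ℕ) (z w : 𝕜) : 𝕜 :=
  ∑ j ∈ range (m + 1), a j * (1 - z * w) ^ j * z ^ (s - j) * w ^ (m - j)

variable [NontriviallyNormedField 𝕜]

lemma hasDerivAt_one_sub_mul_pow_mul_zpow (s : ℤ) (j : ℕ) {z : 𝕜} (hz : z ≠ 0) (w : 𝕜) :
    HasDerivAt (fun u => (1 - u * w) ^ j * u ^ (s - j))
      (z⁻¹ * ((s - j) * ((1 - z * w) ^ j * z ^ (s - j))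
        - j * w * ((1 - z * w) ^ (j - 1) * z ^ (s - j + 1)))) z := by
  have linear : HasDerivAt (fun u => 1 - u * w) (-w) z := by
    simpa using ((hasDerivAt_id z).mul_const w).const_sub 1
  refine ((linear.fun_pow j).fun_mul (hasDerivAt_zpow (s - j) z (.inl hz))).congr_deriv ?_
  rw [zpow_sub_one₀ hz, zpow_add_one₀ hz]
  push_cast
  field_simp
  ring

lemma hasDerivAt_zernikeExpansion (a : ℕ → 𝕜) (s : ℤ) (m : ℕ) {z : 𝕜} (hz : z ≠ 0) (w : 𝕜) :
    HasDerivAt (fun u => zernikeExpansion a s m u w)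
      (z⁻¹ * ∑ j ∈ range (m + 1), a j * ((s - j) * ((1 - z * w) ^ j * z ^ (s - j))
        - j * w * ((1 - z * w) ^ (j - 1) * z ^ (s - j + 1))) * w ^ (m - j)) z := by
  have termwise := HasDerivAt.fun_sum (u := range (m + 1)) fun j _ =>
    ((hasDerivAt_one_sub_mul_pow_mul_zpow s j hz w).const_mul (a j)).mul_const (w ^ (m - j))
  simpa only [zernikeExpansion, mul_sum, mul_assoc, mul_left_comm z⁻¹] using termwise

lemma mul_deriv_zernikeExpansion_sub (a : ℕ → 𝕜) (s : ℤ) (m : ℕ) {z : 𝕜} (hz : z ≠ 0) (w : 𝕜) :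
    z * deriv (fun u => zernikeExpansion a s (m + 1) u w) z
        - (s - (m + 1)) * zernikeExpansion a s (m + 1) z w
      = w * zernikeExpansion (fun j => (m + 1 - j) * a j - (j + 1) * a (j + 1)) s m z w := by
  let diagonal (j : ℕ) : 𝕜 :=
    (m + 1 - j) * a j * ((1 - z * w) ^ j * z ^ (s - j)) * w ^ (m + 1 - j)
  let lowering (j : ℕ) : 𝕜 :=
    j * a j * ((1 - z * w) ^ (j - 1) * z ^ (s - j + 1)) * w * w ^ (m + 1 - j)
  have diagonal_top : diagonal (m + 1) = 0 := by simp [diagonal]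
  have lowering_zero : lowering 0 = 0 := by simp [lowering]
  calc
    _ = ∑ j ∈ range (m + 1 + 1), (diagonal j - lowering j) := by
      rw [(hasDerivAt_zernikeExpansion a s (m + 1) hz w).deriv, mul_inv_cancel_left₀ hz,
        zernikeExpansion, mul_sum, ← sum_sub_distrib]
      refine sum_congr rfl fun j _ => ?_
      ring
    _ = ∑ j ∈ range (m + 1), (diagonal j - lowering (j + 1)) := by
      rw [sum_sub_distrib, sum_sub_distrib, sum_range_succ diagonal, sum_range_succ' lowering,
        diagonal_top, lowering_zero, add_zero, add_zero]
    _ = _ := by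
      rw [zernikeExpansion, mul_sum]
      refine sum_congr rfl fun j hj => ?_
      have pow_w : w ^ (m + 1 - j) = w * w ^ (m - j) := by
        rw [Nat.sub_add_comm (mem_range_succ_iff.mp hj), pow_succ']
      have exponent : s - (j + 1) + 1 = s - j := by ring
      simp only [diagonal, lowering, pow_w, exponent, Nat.add_sub_cancel, Nat.add_sub_add_right,
        Nat.cast_add_one]
      ring

end Expansion

section Coefficients

variable {R : Type*} [CommRing R]

/-- The `j`-th coefficient of the Zernike function with `κ` and `ν = n + ρ`, written with Pochhammer
polynomials in place of quotients of Gamma functions, so that it makes sense in any commutative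
ring. -/
noncomputable def zernikeCoeff (κ ν : R) (m j : ℕ) : R :=
  (-1) ^ j * m.choose j * (descPochhammer R j).eval ν * (ascPochhammer R (m - j)).eval (κ + j + 1)

lemma zernikeCoeff_recurrence (κ ν : R) {m j : ℕ} (hj : j ≤ m) :
    (m + 1 - j) * zernikeCoeff κ ν (m + 1) j - (j + 1) * zernikeCoeff κ ν (m + 1) (j + 1)
      = (m + 1) * (ν + κ + 1) * zernikeCoeff (κ + 1) ν m j := by
  obtain ⟨l, rfl⟩ := Nat.exists_eq_add_of_le hj
  have sub_same : j + l + 1 - j = l + 1 := by lia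
  have choose_same : ((j + l + 1).choose j : R) * (l + 1) = (j + l).choose j * (j + l + 1) := by
    have absorb := (Nat.choose_mul_succ_eq (j + l) j).symm
    rw [sub_same] at absorb
    exact_mod_cast congrArg (Nat.cast (R := R)) absorb
  have choose_next :
      ((j + l + 1).choose (j + 1) : R) * (j + 1) = (j + l + 1) * (j + l).choose j := by
    exact_mod_cast congrArg (Nat.cast (R := R)) (Nat.add_one_mul_choose_eq (j + l) j).symm
  have shift_same : κ + j + 1 + 1 = κ + 1 + j + 1 := by ring
  have shift_next : κ + (j + 1 : ℕ) + 1 = κ + 1 + j + 1 := by push_cast; ring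
  have asc_succ : (ascPochhammer R (l + 1)).eval (κ + j + 1)
      = (κ + j + 1) * (ascPochhammer R l).eval (κ + 1 + j + 1) := by
    simp [ascPochhammer_succ_left, Polynomial.eval_comp, shift_same]
  have desc_succ := descPochhammer_succ_eval j ν
  simp only [zernikeCoeff, sub_same, shift_next, asc_succ, desc_succ, pow_succ, Nat.cast_add j l,
    Nat.add_sub_add_right, Nat.add_sub_cancel_left]
  let common : R :=
    (-1) ^ j * (descPochhammer R j).eval ν * (ascPochhammer R l).eval (κ + 1 + j + 1)
  linear_combination common * (κ + j + 1) * choose_same + common * (ν - j) * choose_next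

end Coefficients

lemma zernikeExpansion_annihilation {𝕜 : Type*} [NontriviallyNormedField 𝕜] (κ ν : 𝕜) (s : ℤ)
    (m : ℕ) {z : 𝕜} (hz : z ≠ 0) (w : 𝕜) :
    z * deriv (fun u => zernikeExpansion (zernikeCoeff κ ν (m + 1)) s (m + 1) u w) z
        - (s - (m + 1)) * zernikeExpansion (zernikeCoeff κ ν (m + 1)) s (m + 1) z w
      = (m + 1) * (ν + κ + 1) * w * zernikeExpansion (zernikeCoeff (κ + 1) ν m) s m z w := by
  rw [mul_deriv_zernikeExpansion_sub _ s m hz w, zernikeExpansion, zernikeExpansion, mul_sum,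
    mul_sum]
  refine sum_congr rfl fun j hj => ?_
  rw [zernikeCoeff_recurrence κ ν (mem_range_succ_iff.mp hj)]
  ring

section Gamma

lemma Gamma_add_natCast_add_one_ne_zero {x : ℝ} (hx : -1 < x) (n : ℕ) :
    Gamma ((x : ℂ) + n + 1) ≠ 0 := by
  refine Gamma_ne_zero_of_re_pos ?_
  simp only [add_re, ofReal_re, natCast_re, one_re]
  linarith [n.cast_nonneg (α := ℝ)]

lemma inv_Gamma_eq_ascPochhammer_mul (s : ℂ) (n : ℕ) :
    (Gamma s)⁻¹ = (ascPochhammer ℂ n).eval s * (Gamma (s + n))⁻¹ := by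
  induction n with
  | zero => simp
  | succ n ih =>
    rw [ih, one_div_Gamma_eq_self_mul_one_div_Gamma_add_one (s + n), ascPochhammer_succ_eval,
      Nat.cast_add_one, ← add_assoc, mul_assoc]

lemma Gamma_add_natCast_div_Gamma {s : ℂ} {n : ℕ} (h : Gamma (s + n) ≠ 0) :
    Gamma (s + n) / Gamma s = (ascPochhammer ℂ n).eval s := by
  rw [div_eq_mul_inv, inv_Gamma_eq_ascPochhammer_mul s n, mul_left_comm, mul_inv_cancel₀ h, mul_one]

lemma Gamma_add_one_div_Gamma_sub_natCast_add_one {ν : ℂ} (h : Gamma (ν + 1) ≠ 0) (j : ℕ) :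
    Gamma (ν + 1) / Gamma (ν - j + 1) = (descPochhammer ℂ j).eval ν := by
  have shift : ν - j + 1 + j = ν + 1 := by ring
  rw [descPochhammer_eval_eq_ascPochhammer, ← Gamma_add_natCast_div_Gamma (by rwa [shift]), shift]

lemma zernikeCoeff_eq_Gamma {κ ν : ℂ} {m j : ℕ} (hκ : Gamma (κ + m + 1) ≠ 0)
    (hν : Gamma (ν + 1) ≠ 0) (hj : j ≤ m) :
    zernikeCoeff κ ν m j = (-1) ^ j * m.factorial * Gamma (ν + 1) * Gamma (κ + m + 1) /
      (j.factorial * (m - j).factorial * Gamma (ν - j + 1) * Gamma (κ + j + 1)) := by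
  have shift : κ + j + 1 + (m - j : ℕ) = κ + m + 1 := by rw [Nat.cast_sub hj]; ring
  rw [zernikeCoeff, Nat.cast_choose ℂ hj, ← Gamma_add_one_div_Gamma_sub_natCast_add_one hν,
    ← Gamma_add_natCast_div_Gamma (by rwa [shift]), shift]
  ring

end Gamma

lemma fracZernike_eq_zernikeExpansion {κ ρ : ℝ} {m n : ℕ} (hκ : Gamma (κ + m + 1) ≠ 0)
    (hρ : Gamma (n + ρ + 1) ≠ 0) (z w : ℂ) :
    fracZernike κ ρ m n z w = zernikeExpansion (zernikeCoeff (κ : ℂ) (n + ρ) m) n m z w :=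
  sum_congr rfl fun j hj => by rw [zernikeCoeff_eq_Gamma hκ hρ (mem_range_succ_iff.mp hj)]

theorem fracZernike_annihilation_general (κ ρ : ℝ) (m n : ℕ) (hκ : Gamma (κ + m + 1) ≠ 0)
    (hρ : Gamma (n + ρ + 1) ≠ 0) (hm : 1 ≤ m) (z : ℂ) (hz : z ≠ 0) (w : ℂ) :
    z * deriv (fun u => fracZernike κ ρ m n u w) z
        - ((n : ℂ) - m) * fracZernike κ ρ m n z w
      = (m : ℂ) * ((n : ℂ) + ρ + κ + 1) * w * fracZernike (κ + 1) ρ (m - 1) n z w := by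
  obtain ⟨k, rfl⟩ := Nat.exists_eq_add_of_le' hm
  have hκ_succ : Gamma ((κ + 1 : ℝ) + k + 1) ≠ 0 := by
    convert hκ using 2
    push_cast
    ring
  simp only [fracZernike_eq_zernikeExpansion hκ hρ, Nat.add_sub_cancel,
    fracZernike_eq_zernikeExpansion hκ_succ hρ]
  simpa using zernikeExpansion_annihilation (κ : ℂ) (n + ρ) n k hz w

/-- The annihilation relation: the operator `(1/(m(n+ρ+κ+1) z̄))(z ∂/∂z - (n-m))` maps
`Z^{κ,ρ}_{m,n}` to `Z^{κ+1,ρ}_{m-1,n}`. -/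
theorem fracZernike_annihilation (κ ρ : ℝ) (hκ : -1 < κ) (hρ : -1 < ρ) (m n : ℕ)
    (hm : 1 ≤ m) (z : ℂ) (hz : z ≠ 0) (w : ℂ) :
    z * deriv (fun u => fracZernike κ ρ m n u w) z
        - ((n : ℂ) - m) * fracZernike κ ρ m n z w
      = (m : ℂ) * ((n : ℂ) + ρ + κ + 1) * w * fracZernike (κ + 1) ρ (m - 1) n z w := by
  have hρ_Gamma : Gamma (n + ρ + 1) ≠ 0 :=
    add_comm (n : ℂ) ρ ▸ Gamma_add_natCast_add_one_ne_zero hρ n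
  exact fracZernike_annihilation_general κ ρ m n (Gamma_add_natCast_add_one_ne_zero hκ m) hρ_Gamma
    hm z hz w
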